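/- Every noncomplete k-contraction-critical graph with k ≥ 29 is 9-connected, and every noncomplete k-contraction-critical graph with k ≥ 41 is 10-connected. -/

import Mathlib

/-!
Put `t = k - 1` and let `S` be a smallest set whose removal disconnects `G`; suppose `|S|` is
below the claimed connectivity. Let `B` be a component of `G - S` and `A` the remaining vertices
outside `S`. By minimality every vertex of `S` has a neighbour in `B`. It suffices to find
`t`-colourings of `G[A ∪ S]` and `G[B ∪ S]` that induce the same partition of `S`: after renaming
colours they combine to a `t`-colouring of `G` (`glue`), which is impossible.

*Oracle.* Label the vertices so that adjacent vertices of `S` have different labels, and contract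
in `G[A ∪ S]` each label component that meets `S`. Together with `B` this is a proper minor of
`G`, hence `t`-colourable; so `G[B ∪ S]` has a `t`-colouring `ψ` that is constant on `S` within
label components and separates adjacent ones (`oracle`).

*Start.* Applying this to the other side, with a maximum independent set `I ⊆ S` contracted
together with `B`, gives a `t`-colouring `φ` of `G[A ∪ S]` that is constant on `I` (`dirac`).
Since each vertex of `S \ I` has a neighbour in `I`, counting shows that the number of ordered
pairs in `S` that are neither adjacent nor of the same colour is at most `2 (t - |S|)`, if
`|S| ≤ 8`, `t ≥ 28` or `|S| ≤ 9`, `t ≥ 40` (`bad_card`, `count_arith`).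

*Process.* Each vertex of `S` borrows a colour class of its own, one vertex of each colour class
of `S` borrowing that very class; this uses `|S|` colours, and the other `t - |S|` are free. The
labels are obtained from `φ` by merging the borrowed classes into the classes of the borrowers.
An obstruction is an ordered pair of representatives with different colours and non-adjacent
label components; the invariant is that there are at most twice as many obstructions as free
colours (`St`). Given `ψ` from the oracle, a colour of `ψ` occurring on several `φ`-classes of
`S` gives two obstructions, so free colours can be assigned to all of these, and for every `x`
in `S` there is a Kempe chain exchanging `φ x` with the target colour for `ψ x`
(`exists_target`). If the enlarged label components belonging to these chains touch only when
that is harmless, all exchanges can be made at once and turn the partition of `S` by `φ` into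
the one by `ψ` (`no_conflict`). Otherwise two touching components are either to be separated
though they have the same label, or to be identified though they have different labels. Merging
the free colours concerned into the labels then joins the components, or makes them adjacent,
and removes at least two obstructions for each free colour spent (`conflict_same`,
`conflict_diff`). So the process ends (`core`).
-/

open SimpleGraph

/-- `G` is `k`-linked: any `2k` distinct vertices, grouped into `k` pairs, can be joined
by `k` pairwise vertex-disjoint paths. -/
def Linked {V : Type} (G : SimpleGraph V) (k : ℕ) : Prop :=
  ∀ u v : Fin k → V,
    Function.Injective (Sum.elim u v) →
    ∃ P : (i : Fin k) → G.Walk (u i) (v i),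
      (∀ i, (P i).IsPath) ∧
      ∀ i j, i ≠ j → ∀ x ∈ (P i).support, x ∉ (P j).support

/-- `G` is `(2,…,2,1)`-knitted with `k` twos: any `k` pairs of vertices together with one
further vertex `u₀` (all distinct) can be linked by `k` pairwise vertex-disjoint paths,
each avoiding `u₀`. -/
def KnittedOne {V : Type} (G : SimpleGraph V) (k : ℕ) : Prop :=
  ∀ (u₀ : V) (u v : Fin k → V),
    Function.Injective (Sum.elim (Sum.elim u v) (fun _ : Unit => u₀)) →
    ∃ P : (i : Fin k) → G.Walk (u i) (v i),
      (∀ i, (P i).IsPath) ∧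
      (∀ i, u₀ ∉ (P i).support) ∧
      ∀ i j, i ≠ j → ∀ x ∈ (P i).support, x ∉ (P j).support

/-- `H` is a minor of `G`, witnessed by pairwise-disjoint nonempty connected branch sets. -/
def IsMinor {W V : Type} (H : SimpleGraph W) (G : SimpleGraph V) : Prop :=
  ∃ f : W → Set V,
    (∀ w, (f w).Nonempty) ∧
    (∀ w, (G.induce (f w)).Connected) ∧
    (Pairwise fun w w' => Disjoint (f w) (f w')) ∧
    (∀ ⦃w w'⦄, H.Adj w w' → ∃ a ∈ f w, ∃ b ∈ f w', G.Adj a b)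

/-- `H` is a proper minor of `G`. -/
def IsProperMinor {W V : Type} (H : SimpleGraph W) (G : SimpleGraph V) : Prop :=
  IsMinor H G ∧ ¬ IsMinor G H

/-- `G` is `k`-contraction-critical: its chromatic number is `k`, but every proper minor
is `(k-1)`-colorable. -/
def ContractionCritical {V : Type} (k : ℕ) (G : SimpleGraph V) : Prop :=
  G.chromaticNumber = (k : ENat) ∧
  ∀ (W : Type) (H : SimpleGraph W), IsProperMinor H G → H.Colorable (k - 1)

/-- `G` is `t`-connected: more than `t` vertices, and deleting any fewer than `t`
vertices leaves it connected. -/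
def KConnected {V : Type} [Fintype V] (G : SimpleGraph V) (t : ℕ) : Prop :=
  t < Fintype.card V ∧
  ∀ S : Finset V, S.card < t → (G.induce {v : V | v ∉ S}).Connected

/-- Independence number of the subgraph of `G` induced on `S`. -/
noncomputable def alphaOn {V : Type} (G : SimpleGraph V) (S : Set V) : ℕ :=
  sSup {n | ∃ t : Finset V, ↑t ⊆ S ∧ t.card = n ∧
    ∀ a ∈ t, ∀ b ∈ t, a ≠ b → ¬ G.Adj a b}

/-- Number of common neighbors of `a` and `b` in `G`. -/
noncomputable def commonNbrs {V : Type} (G : SimpleGraph V) (a b : V) : ℕ :=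
  {x : V | G.Adj a x ∧ G.Adj b x}.ncard

/-! ### Labelled components and the minor oracle -/

/-- The spanning subgraph of `G` formed by the edges with both ends in `X`. -/
def within {V : Type} (G : SimpleGraph V) (X : Set V) : SimpleGraph V where
  Adj u v := G.Adj u v ∧ u ∈ X ∧ v ∈ X
  symm := ⟨fun _ _ h => ⟨h.1.symm, h.2.2, h.2.1⟩⟩
  loopless := ⟨fun _ h => G.loopless.irrefl _ h.1⟩

/-- The spanning subgraph of `H` formed by the edges whose ends carry the same label. Its
components are the generalized Kempe components of the labelling `l`. -/
def labG {V L : Type} (H : SimpleGraph V) (l : V → L) : SimpleGraph V where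
  Adj u v := H.Adj u v ∧ l u = l v
  symm := ⟨fun _ _ h => ⟨h.1.symm, h.2.symm⟩⟩
  loopless := ⟨fun _ h => H.loopless.irrefl _ h.1⟩

/-- `x` and `v` lie in the same component of `labG H l`. -/
abbrev Reach {V L : Type} (H : SimpleGraph V) (l : V → L) (x v : V) : Prop :=
  (labG H l).Reachable x v

/-- Some edge of `H` joins the label component of `x` to that of `y`. -/
def AdjW {V L : Type} (H : SimpleGraph V) (l : V → L) (x y : V) : Prop :=
  ∃ u v, Reach H l x u ∧ Reach H l y v ∧ H.Adj u v

lemma AdjW.symm {V L : Type} {H : SimpleGraph V} {l : V → L} {x y : V} (h : AdjW H l x y) :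
    AdjW H l y x := by
  obtain ⟨u, v, hu, hv, e⟩ := h
  exact ⟨v, u, hv, hu, e.symm⟩

lemma Reach.ind {V L : Type} {H : SimpleGraph V} {l : V → L} {x : V} {p : V → Prop}
    (h0 : p x) (hs : ∀ u v, Reach H l x u → p u → H.Adj u v → l u = l v → p v) {v : V}
    (h : Reach H l x v) : p v := by
  obtain ⟨w⟩ := h.symm
  revert h0 hs
  induction w with
  | nil => intro h0 _; exact h0
  | cons e w ih =>
    intro h0 hs
    exact hs _ _ w.reachable.symm (ih w.reachable.symm h0 hs) e.1.symm e.2.symm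

lemma Reach.step {V L : Type} {H : SimpleGraph V} {l : V → L} {x u v : V}
    (h : Reach H l x u) (e : H.Adj u v) (hl : l u = l v) : Reach H l x v :=
  h.trans (SimpleGraph.Adj.reachable (G := labG H l) ⟨e, hl⟩)

lemma Reach.label {V L : Type} {H : SimpleGraph V} {l : V → L} {x v : V}
    (h : Reach H l x v) : l x = l v :=
  Reach.ind (p := fun v => l x = l v) rfl (fun _ _ _ h1 _ h2 => h1.trans h2) h

/-- Contracting the label components on the `A`-side gives a proper minor: a colouring `ψ` of
the `B`-side that is constant on label components and separates adjacent ones. -/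
lemma oracle {V : Type} [Fintype V] {k : ℕ} {G : SimpleGraph V} (hG : ContractionCritical k G)
    {A B S : Set V} (hAB : ∀ v ∈ A, v ∉ B) (hAS : ∀ v ∈ A, v ∉ S) (hBS : ∀ v ∈ B, v ∉ S)
    (hk : Nonempty (Fin (k - 1)))
    (hA : A.Nonempty) {L : Type} (lab : V → L)
    (hlab : ∀ x ∈ S, ∀ y ∈ S, G.Adj x y → lab x ≠ lab y) :
    ∃ ψ : V → Fin (k - 1), (∀ u v, (within G (B ∪ S)).Adj u v → ψ u ≠ ψ v) ∧
      (∀ x ∈ S, ∀ y ∈ S, Reach (within G (A ∪ S)) lab x y → ψ x = ψ y) ∧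
      (∀ x ∈ S, ∀ y ∈ S, ¬ Reach (within G (A ∪ S)) lab x y →
        AdjW (within G (A ∪ S)) lab x y → ψ x ≠ ψ y) := by
  classical
  let comp : V → Set V := fun x => {v | Reach (within G (A ∪ S)) lab x v}
  have hcompAS : ∀ x ∈ S, ∀ v ∈ comp x, v ∈ A ∪ S := by
    intro x hx v hv
    exact Reach.ind (H := within G (A ∪ S)) (l := lab) (p := fun v => v ∈ A ∪ S) (Or.inr hx) (fun _ _ _ _ e _ => e.2.2) hv
  have hcompeq : ∀ x y v, v ∈ comp x → v ∈ comp y → comp x = comp y := by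
    intro x y v h1 h2
    ext w
    exact ⟨fun h => h2.trans (h1.symm.trans h), fun h => h1.trans (h2.symm.trans h)⟩
  let W : Type := {v // v ∈ B} ⊕ {P : Set V // ∃ x ∈ S, P = comp x}
  let f : W → Set V := Sum.elim (fun b => {b.1}) (fun P => P.1)
  let M : SimpleGraph W :=
    { Adj := fun w w' => w ≠ w' ∧ ∃ a ∈ f w, ∃ b ∈ f w', G.Adj a b
      symm := ⟨fun _ _ h => ⟨h.1.symm, by
        obtain ⟨_, a, ha, b, hb, e⟩ := h
        exact ⟨b, hb, a, ha, e.symm⟩⟩⟩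
      loopless := ⟨fun _ h => h.1 rfl⟩ }
  have hminor : IsMinor M G := by
    refine ⟨f, ?_, ?_, ?_, fun w w' h => h.2⟩
    · rintro (b | ⟨P, x, hx, rfl⟩)
      · exact ⟨b.1, rfl⟩
      · exact ⟨x, Reachable.refl _⟩
    · rintro (b | ⟨P, x, hx, rfl⟩)
      · have : Subsingleton ↥(f (Sum.inl b)) := by
          show Subsingleton ↥({b.1} : Set V)
          infer_instance
        have : Nonempty ↥(f (Sum.inl b)) := ⟨⟨b.1, rfl⟩⟩
        exact ⟨fun u v => by rw [Subsingleton.elim u v]⟩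
      · show (G.induce (comp x)).Connected
        have hx0 : x ∈ comp x := Reachable.refl _
        have key : ∀ v (hv : v ∈ comp x), (G.induce (comp x)).Reachable ⟨x, hx0⟩ ⟨v, hv⟩ := by
          intro v hv
          refine Reach.ind (H := within G (A ∪ S)) (l := lab)
            (p := fun v => ∀ hv : v ∈ comp x, (G.induce (comp x)).Reachable ⟨x, hx0⟩ ⟨v, hv⟩)
            (fun _ => Reachable.refl _) ?_ hv hv
          intro u v hu ih e _ hv
          refine (ih hu).trans (SimpleGraph.Adj.reachable ?_)
          exact e.1
        have : Nonempty ↥(comp x) := ⟨⟨x, hx0⟩⟩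
        exact ⟨fun u v => (key u.1 u.2).symm.trans (key v.1 v.2)⟩
    · rintro (b | ⟨P, x, hx, rfl⟩) (b' | ⟨P', y, hy, rfl⟩) hne
      · show Disjoint ({b.1} : Set V) {b'.1}
        rw [Set.disjoint_singleton]
        intro h
        exact hne (congrArg Sum.inl (Subtype.ext h))
      · show Disjoint ({b.1} : Set V) (comp y)
        rw [Set.disjoint_singleton_left]
        intro h
        rcases hcompAS y hy _ h with h | h
        · exact hAB _ h b.2
        · exact hBS _ b.2 h
      · show Disjoint (comp x) ({b'.1} : Set V)
        rw [Set.disjoint_singleton_right]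
        intro h
        rcases hcompAS x hx _ h with h | h
        · exact hAB _ h b'.2
        · exact hBS _ b'.2 h
      · show Disjoint (comp x) (comp y)
        rw [Set.disjoint_left]
        intro v h1 h2
        exact hne (congrArg Sum.inr (Subtype.ext (hcompeq x y v h1 h2)))
  -- there are at most `|B| + |S| < |V|` branch sets, so `G` is not a minor of `M`
  have hproper : ¬ IsMinor G M := by
    rintro ⟨g, hg1, -, hg3, -⟩
    choose r hr using hg1
    have hrinj : Function.Injective r := by
      intro u v h
      by_contra hne
      exact Set.disjoint_left.1 (hg3 hne) (hr u) (h ▸ hr v)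
    let q : W → V := Sum.elim (fun b => b.1) (fun P => Classical.choose P.2)
    have hqP : ∀ P : {P : Set V // ∃ x ∈ S, P = comp x},
        q (Sum.inr P) ∈ S ∧ P.1 = comp (q (Sum.inr P)) := fun P => Classical.choose_spec P.2
    have hqinj : Function.Injective q := by
      rintro (b | P) (b' | P') h
      · exact congrArg Sum.inl (Subtype.ext h)
      · exact absurd ((hqP P').1) (h ▸ hBS _ b.2)
      · exact absurd ((hqP P).1) (h ▸ hBS _ b'.2)
      · refine congrArg Sum.inr (Subtype.ext ?_)
        rw [(hqP P).2, (hqP P').2, h]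
    have hbij := Finite.injective_iff_surjective.1 (hqinj.comp hrinj)
    obtain ⟨a, ha⟩ := hA
    obtain ⟨v, hv⟩ := hbij a
    have : ∀ w, q w ∉ A := by
      rintro (b | P) h
      · exact hAB _ h b.2
      · exact hAS _ h (hqP P).1
    have hv' : q (r v) = a := hv
    exact this (r v) (hv'.symm ▸ ha)
  obtain ⟨c⟩ := hG.2 W M ⟨hminor, hproper⟩
  have hcol : ∀ w w', M.Adj w w' → c w ≠ c w' := fun w w' h => c.valid h
  have hBcase : ∀ v, v ∈ B ∪ S → v ∉ B → v ∈ S := fun v h h' => h.resolve_left h'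
  obtain ⟨d⟩ : Nonempty (Fin (k - 1)) := hk
  let ψ : V → Fin (k - 1) := fun v =>
    if h : v ∈ B then c (Sum.inl ⟨v, h⟩)
    else if h' : v ∈ S then c (Sum.inr ⟨comp v, v, h', rfl⟩) else d
  have hψB : ∀ v (h : v ∈ B), ψ v = c (Sum.inl ⟨v, h⟩) := fun v h => dif_pos h
  have hψS : ∀ v (h : v ∈ S), ψ v = c (Sum.inr ⟨comp v, v, h, rfl⟩) := fun v h => by
    have : v ∉ B := fun hb => hBS v hb h
    simp only [ψ, dif_neg this, dif_pos h]
  have hself : ∀ x, x ∈ comp x := fun x => Reachable.refl _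
  have hsep : ∀ x (hx : x ∈ S) y (hy : y ∈ S), ¬ Reach (within G (A ∪ S)) lab x y →
      ∀ u ∈ comp x, ∀ v ∈ comp y, G.Adj u v → ψ x ≠ ψ y := by
    intro x hx y hy hne u hu v hv e
    rw [hψS x hx, hψS y hy]
    refine hcol _ _ ⟨?_, u, hu, v, hv, e⟩
    intro h
    have h1 : comp x = comp y := congrArg Subtype.val (Sum.inr.inj h)
    exact hne (show y ∈ comp x from h1 ▸ hself y)
  refine ⟨ψ, ?_, ?_, ?_⟩
  · rintro u v ⟨e, hu, hv⟩
    have mixed : ∀ u v, u ∈ B → v ∈ S → G.Adj u v → ψ u ≠ ψ v := by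
      intro u v hu hv e
      rw [hψB u hu, hψS v hv]
      exact hcol _ _ ⟨by simp, u, rfl, v, hself v, e⟩
    rcases hu with hu | hu <;> rcases hv with hv | hv
    · rw [hψB u hu, hψB v hv]
      refine hcol _ _ ⟨?_, u, rfl, v, rfl, e⟩
      intro h
      exact e.ne (congrArg Subtype.val (Sum.inl.inj h))
    · exact mixed u v hu hv e
    · exact (mixed v u hv hu e.symm).symm
    · exact hsep u hu v hv (fun h => hlab u hu v hv e h.label) u (hself u) v (hself v) e
  · intro x hx y hy h
    rw [hψS x hx, hψS y hy]
    congr 3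
    exact hcompeq x y y h (hself y)
  · rintro x hx y hy hne ⟨u, v, hu, hv, e⟩
    exact hsep x hx y hy hne u hu v hv e.1

/-! ### Merging label components -/

/-- The ordered pairs of representatives in `T` with different colours whose label components
are not adjacent; these are the pairs a colouring of the other side may identify. -/
noncomputable def obs {V : Type} {t : ℕ} (H : SimpleGraph V) (φ l : V → Fin t) (T : Finset V) :
    Finset (V × V) :=
  open Classical in (T ×ˢ T).filter fun p => φ p.1 ≠ φ p.2 ∧ ¬ AdjW H l p.1 p.2

lemma mem_obs {V : Type} {t : ℕ} {H : SimpleGraph V} {φ l : V → Fin t} {T : Finset V} {x y : V} :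
    (x, y) ∈ obs H φ l T ↔ x ∈ T ∧ y ∈ T ∧ φ x ≠ φ y ∧ ¬ AdjW H l x y := by
  simp [obs, and_assoc]

lemma obs_swap {V : Type} {t : ℕ} {H : SimpleGraph V} {φ l : V → Fin t} {T : Finset V} {x y : V}
    (h : (x, y) ∈ obs H φ l T) : (y, x) ∈ obs H φ l T := by
  rw [mem_obs] at h ⊢
  exact ⟨h.2.1, h.1, h.2.2.1.symm, fun h' => h.2.2.2 h'.symm⟩

/-- The state of the recolouring process. The colour class `ρ x` of `φ` is lent to the label
`φ x` of `x ∈ S`; the colours in `F` are still unused and label their own class, whose vertices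
are therefore isolated in `labG H l`; `T` meets every label component that meets `S`; and the
free colours suffice to pay for the remaining obstructions. -/
structure St {V : Type} {t : ℕ} (H : SimpleGraph V) (S : Finset V) (φ ρ l : V → Fin t)
    (F : Finset (Fin t)) (T : Finset V) : Prop where
  own : ∀ x ∈ S, ∀ v, φ v = ρ x → l v = φ x
  free : ∀ v, φ v ∈ F → l v = φ v
  free' : ∀ v, l v ∈ F → φ v = l v
  disj : ∀ x ∈ S, ρ x ∉ F
  sub : T ⊆ S
  cov : ∀ x ∈ S, ∃ y ∈ T, Reach H l x y
  card : (obs H φ l T).card ≤ 2 * F.card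

lemma reach_congr {V L : Type} {H : SimpleGraph V} {l₁ l₂ : V → L} {x : V}
    (h : ∀ v, Reach H l₁ x v → l₂ v = l₁ v) {v : V} (hv : Reach H l₁ x v) : Reach H l₂ x v := by
  refine Reach.ind (H := H) (l := l₁) (p := fun v => Reach H l₂ x v) (Reachable.refl _) ?_ hv
  intro u v hu ih e hl
  exact ih.step e (by rw [h u hu, h v (Reach.step hu e hl), hl])

/-- `D` has at least twice as many elements as `R` if every fibre of `g` over `R` contains a
pair together with its reverse. -/
lemma two_mul_card_le {V β : Type} (D : Finset (V × V)) (R : Finset β) (g : V × V → β)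
    (h : ∀ e ∈ R, ∃ a b, a ≠ b ∧ (a, b) ∈ D ∧ (b, a) ∈ D ∧ g (a, b) = e ∧ g (b, a) = e) :
    2 * R.card ≤ D.card := by
  classical
  have h1 : (D.filter fun p => g p ∈ R).card = ∑ e ∈ R, ((D.filter fun p => g p ∈ R).filter
      fun p => g p = e).card :=
    Finset.card_eq_sum_card_fiberwise fun p hp => (Finset.mem_filter.1 hp).2
  have h2 : R.card • 2 ≤ ∑ e ∈ R, ((D.filter fun p => g p ∈ R).filter fun p => g p = e).card := by
    refine Finset.card_nsmul_le_sum _ _ _ ?_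
    intro e he
    obtain ⟨a, b, hab, h1, h2, h3, h4⟩ := h e he
    have : ({(a, b), (b, a)} : Finset (V × V)) ⊆
        (D.filter fun p => g p ∈ R).filter fun p => g p = e := by
      intro p hp
      simp only [Finset.mem_insert, Finset.mem_singleton] at hp
      rcases hp with rfl | rfl
      · simp [h1, h3, he]
      · simp [h2, h4, he]
    have hc := Finset.card_le_card this
    rwa [Finset.card_pair (by simp [hab])] at hc
  have h3 := Finset.card_filter_le D fun p => g p ∈ R
  rw [smul_eq_mul] at h2
  omega

/-- The fixed data of the process: a proper colouring `φ` and an injective assignment `ρ` of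
colours to the vertices of `S` in which each colour class of `S` keeps its own colour. -/
structure Base {V : Type} {t : ℕ} (H : SimpleGraph V) (S : Finset V) (φ ρ : V → Fin t) :
    Prop where
  proper : ∀ u v, H.Adj u v → φ u ≠ φ v
  inj : ∀ x ∈ S, ∀ y ∈ S, ρ x = ρ y → x = y
  rep : ∀ x ∈ S, ∃ y ∈ S, φ y = φ x ∧ ρ y = φ x

section Step

variable {V : Type} {t : ℕ} {H : SimpleGraph V} {S : Finset V} {φ ρ l l' : V → Fin t}
  {F R : Finset (Fin t)} {T T' : Finset V}

lemma St.lab (b : Base H S φ ρ) (s : St H S φ ρ l F T) {x v : V} (hx : x ∈ S) (h : φ v = φ x) :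
    l v = φ x := by
  obtain ⟨y, hy, h1, h2⟩ := b.rep x hx
  rw [s.own y hy v (h.trans h2.symm), h1]

lemma St.notMem (b : Base H S φ ρ) (s : St H S φ ρ l F T) {x : V} (hx : x ∈ S) : φ x ∉ F := by
  obtain ⟨y, hy, h1, h2⟩ := b.rep x hx
  exact h2 ▸ s.disj y hy

lemma St.mono (b : Base H S φ ρ) (s : St H S φ ρ l F T) (hR : R ⊆ F)
    (hoff : ∀ v, φ v ∉ R → l' v = l v) {x v : V} (h : Reach H l x v) : Reach H l' x v := by
  refine Reachable.mono ?_ h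
  intro u v e
  have key : ∀ u v, H.Adj u v → l u = l v → φ u ∉ R := by
    intro u v e hl hu
    have h1 := s.free u (hR hu)
    have h2 := s.free' v (by rw [← hl, h1]; exact hR hu)
    exact b.proper u v e (by rw [h2, ← hl, h1])
  refine ⟨e.1, ?_⟩
  rw [hoff u (key u v e.1 e.2), hoff v (key v u e.1.symm e.2.symm), e.2]

lemma St.monoW (b : Base H S φ ρ) (s : St H S φ ρ l F T) (hR : R ⊆ F)
    (hoff : ∀ v, φ v ∉ R → l' v = l v) {x y : V} (h : AdjW H l x y) : AdjW H l' x y := by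
  obtain ⟨u, v, hu, hv, e⟩ := h
  exact ⟨u, v, s.mono b hR hoff hu, s.mono b hR hoff hv, e⟩

/-- Handing the free colours `R` over to labels of vertices of `S` keeps the invariants. The
colours spent are paid for by pairs `(x, y)` and `(y, x)` that stop being obstructions. -/
lemma St.update (b : Base H S φ ρ) (s : St H S φ ρ l F T) (hR : R ⊆ F)
    (hoff : ∀ v, φ v ∉ R → l' v = l v) (hon : ∀ v, φ v ∈ R → ∃ x ∈ S, l' v = φ x)
    (hT : T' ⊆ T) (hcov : ∀ x ∈ T, ∃ y ∈ T', Reach H l' x y) (g : V × V → Fin t)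
    (hg : ∀ e ∈ R, ∃ x y, (x, y) ∈ obs H φ l T ∧ (x, y) ∉ obs H φ l' T' ∧
      g (x, y) = e ∧ g (y, x) = e) :
    St H S φ ρ l' (F \ R) T' where
  own x hx v hv := by
    rw [hoff v (fun h => s.disj x hx (hv ▸ hR h)), s.own x hx v hv]
  free v hv := by
    rw [Finset.mem_sdiff] at hv
    rw [hoff v hv.2, s.free v hv.1]
  free' v hv := by
    rw [Finset.mem_sdiff] at hv
    by_cases h : φ v ∈ R
    · obtain ⟨x, hx, h1⟩ := hon v h
      exact absurd (h1 ▸ hv.1) (s.notMem b hx)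
    · rw [hoff v h] at hv ⊢
      exact s.free' v hv.1
  disj x hx h := s.disj x hx (Finset.mem_sdiff.1 h).1
  sub := hT.trans s.sub
  cov x hx := by
    obtain ⟨y, hy, h1⟩ := s.cov x hx
    obtain ⟨z, hz, h2⟩ := hcov y hy
    exact ⟨z, hz, (s.mono b hR hoff h1).trans h2⟩
  card := by
    classical
    have hsub : obs H φ l' T' ⊆ obs H φ l T := by
      rintro ⟨x, y⟩ h
      rw [mem_obs] at h ⊢
      exact ⟨hT h.1, hT h.2.1, h.2.2.1, fun h' => h.2.2.2 (s.monoW b hR hoff h')⟩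
    have h1 : 2 * R.card ≤ (obs H φ l T \ obs H φ l' T').card := by
      refine two_mul_card_le _ R g ?_
      intro e he
      obtain ⟨x, y, h1, h2, h3, h4⟩ := hg e he
      refine ⟨x, y, ?_, ?_, ?_, h3, h4⟩
      · rintro rfl
        exact (mem_obs.1 h1).2.2.1 rfl
      · exact Finset.mem_sdiff.2 ⟨h1, h2⟩
      · exact Finset.mem_sdiff.2 ⟨obs_swap h1, fun h => h2 (obs_swap h)⟩
    have h2 := Finset.card_sdiff_add_card_eq_card hsub
    have h3 := Finset.card_sdiff_add_card_eq_card hR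
    have h4 := s.card
    omega

/-- What the minor oracle guarantees about the colouring `ψ` of the other side. -/
structure Compat (H : SimpleGraph V) (S : Finset V) (φ l ψ : V → Fin t) : Prop where
  eq : ∀ x ∈ S, ∀ y ∈ S, Reach H l x y → ψ x = ψ y
  ne : ∀ x ∈ S, ∀ y ∈ S, φ x ≠ φ y → AdjW H l x y → ψ x ≠ ψ y

/-- `τ` translates the colours of `ψ` on `S` into the colours that Kempe changes of `φ` aim at:
colours of `ψ` shared by several `φ`-classes go to free colours, the others go to a colour
already lent to their class. -/
structure Target (S : Finset V) (φ ρ ψ : V → Fin t) (F : Finset (Fin t)) (τ : Fin t → Fin t) :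
    Prop where
  inj : ∀ x ∈ S, ∀ y ∈ S, τ (ψ x) = τ (ψ y) → ψ x = ψ y
  cases : ∀ x ∈ S, (τ (ψ x) ∈ F ∧ ∃ y ∈ S, ψ y = ψ x ∧ φ y ≠ φ x) ∨
    ∃ z ∈ S, φ z = φ x ∧ τ (ψ x) = ρ z

lemma St.rep (b : Base H S φ ρ) (s : St H S φ ρ l F T) {ψ : V → Fin t} (c : Compat H S φ l ψ)
    {x : V} (hx : x ∈ S) : ∃ y ∈ T, Reach H l x y ∧ φ y = φ x ∧ ψ y = ψ x := by
  obtain ⟨y, hy, h⟩ := s.cov x hx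
  refine ⟨y, hy, h, ?_, (c.eq x hx y (s.sub hy) h).symm⟩
  rw [← s.lab b hx rfl, ← s.lab b (s.sub hy) rfl, h.label]

/-- A colour of `ψ` shared by several `φ`-classes accounts for two obstructions of its own, so
there are enough free colours for all of these. -/
lemma exists_target (b : Base H S φ ρ) (s : St H S φ ρ l F T) {ψ : V → Fin t}
    (c : Compat H S φ l ψ) : ∃ τ, Target S φ ρ ψ F τ := by
  classical
  let M : Finset (Fin t) := Finset.univ.filter fun e =>
    ∃ x ∈ S, ∃ y ∈ S, ψ x = e ∧ ψ y = e ∧ φ x ≠ φ y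
  have hM : ∀ e, e ∈ M ↔ ∃ x ∈ S, ∃ y ∈ S, ψ x = e ∧ ψ y = e ∧ φ x ≠ φ y := by
    intro e
    simp [M]
  have hcard : 2 * M.card ≤ (obs H φ l T).card := by
    refine two_mul_card_le _ M (fun p => ψ p.1) ?_
    intro e he
    obtain ⟨x, hx, y, hy, h1, h2, h3⟩ := (hM e).1 he
    obtain ⟨x', hx', -, h4, h5⟩ := s.rep b c hx
    obtain ⟨y', hy', -, h6, h7⟩ := s.rep b c hy
    have hne : φ x' ≠ φ y' := by rw [h4, h6]; exact h3
    have hmem : (x', y') ∈ obs H φ l T := mem_obs.2 ⟨hx', hy', hne, fun h =>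
      c.ne x' (s.sub hx') y' (s.sub hy') hne h (by rw [h5, h7, h1, h2])⟩
    exact ⟨x', y', fun h => hne (by rw [h]), hmem, obs_swap hmem, by simp [h5, h1],
      by simp [h7, h2]⟩
  have hle : M.card ≤ F.card := by
    have := s.card
    omega
  obtain ⟨f⟩ : Nonempty (M ↪ F) :=
    Function.Embedding.nonempty_of_card_le (by simpa using hle)
  let τ : Fin t → Fin t := fun e =>
    if h : e ∈ M then (f ⟨e, h⟩ : Fin t)
    else if h : ∃ z ∈ S, ψ z = e then ρ (Classical.choose h) else e
  have hτM : ∀ e (h : e ∈ M), τ e = f ⟨e, h⟩ := fun e h => dif_pos h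
  have hτS : ∀ x ∈ S, ψ x ∉ M → ∃ z ∈ S, ψ z = ψ x ∧ φ z = φ x ∧ τ (ψ x) = ρ z := by
    intro x hx h
    have hex : ∃ z ∈ S, ψ z = ψ x := ⟨x, hx, rfl⟩
    obtain ⟨h1, h2⟩ := Classical.choose_spec hex
    refine ⟨_, h1, h2, ?_, ?_⟩
    · by_contra hne
      exact h ((hM _).2 ⟨_, h1, x, hx, h2, rfl, hne⟩)
    · simp only [τ, dif_neg h, dif_pos hex]
  refine ⟨τ, ?_, ?_⟩
  · intro x hx y hy h
    by_cases h1 : ψ x ∈ M <;> by_cases h2 : ψ y ∈ M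
    · rw [hτM _ h1, hτM _ h2] at h
      exact congrArg Subtype.val (f.injective (Subtype.ext h))
    · obtain ⟨z, hz, -, -, h3⟩ := hτS y hy h2
      exact absurd (f ⟨_, h1⟩).2 (by rw [← hτM _ h1, h, h3]; exact s.disj z hz)
    · obtain ⟨z, hz, -, -, h3⟩ := hτS x hx h1
      exact absurd (f ⟨_, h2⟩).2 (by rw [← hτM _ h2, ← h, h3]; exact s.disj z hz)
    · obtain ⟨z, hz, h3, -, h4⟩ := hτS x hx h1
      obtain ⟨w, hw, h5, -, h6⟩ := hτS y hy h2
      have : z = w := b.inj z hz w hw (by rw [← h4, ← h6, h])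
      rw [← h3, ← h5, this]
  · intro x hx
    by_cases h1 : ψ x ∈ M
    · refine Or.inl ⟨hτM _ h1 ▸ (f ⟨_, h1⟩).2, ?_⟩
      obtain ⟨y, hy, z, hz, h2, h3, h4⟩ := (hM _).1 h1
      by_cases h5 : φ y = φ x
      · exact ⟨z, hz, h3, fun h => h4 (by rw [h5, h])⟩
      · exact ⟨y, hy, h2, h5⟩
    · obtain ⟨z, hz, -, h3, h4⟩ := hτS x hx h1
      exact Or.inr ⟨z, hz, h3, h4⟩


/-- The labelling obtained from `l` by lending the colour `c` to the label `φ x`. -/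
def lent (φ l : V → Fin t) (x : V) (c : Fin t) (v : V) : Fin t := if φ v = c then φ x else l v

/-- The label component of `x` after the colour `c` has been lent to it. -/
abbrev Kr (H : SimpleGraph V) (φ l : V → Fin t) (x : V) (c : Fin t) (v : V) : Prop :=
  Reach H (lent φ l x c) x v

lemma Kr.label (b : Base H S φ ρ) (s : St H S φ ρ l F T) {x v : V} {c : Fin t} (hx : x ∈ S)
    (h : Kr H φ l x c v) : lent φ l x c v = φ x := by
  rw [← Reach.label h, lent, s.lab b hx rfl, ite_self]

lemma Kr.of_reach (b : Base H S φ ρ) (s : St H S φ ρ l F T) {x v : V} {c : Fin t} (hx : x ∈ S)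
    (h : Reach H l x v) : Kr H φ l x c v := by
  refine reach_congr ?_ h
  intro u hu
  have := hu.label
  rw [s.lab b hx rfl] at this
  rw [lent, ← this, ite_self]

lemma Kr.reach (s : St H S φ ρ l F T) {x z v : V} {c : Fin t} (hz : z ∈ S)
    (h1 : φ z = φ x) (h2 : c = ρ z) (h : Kr H φ l x c v) : Reach H l x v := by
  refine reach_congr ?_ h
  intro u _
  unfold lent
  split_ifs with h3
  · rw [s.own z hz u (h3.trans h2), h1]
  · rfl

/-- The recoloured components of `x` and `y` meet or are adjacent. -/
def Touch (H : SimpleGraph V) (φ l : V → Fin t) (τ : Fin t → Fin t) (ψ : V → Fin t)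
    (x y : V) : Prop :=
  ∃ u v, Kr H φ l x (τ (ψ x)) u ∧ Kr H φ l y (τ (ψ y)) v ∧ (u = v ∨ H.Adj u v)

/-- Two touching components of the same `φ`-class that `ψ` separates are merged by handing
their free target colours to the common label. -/
lemma conflict_same (b : Base H S φ ρ) (s : St H S φ ρ l F T) {ψ : V → Fin t}
    (c : Compat H S φ l ψ) {τ : Fin t → Fin t} (ht : Target S φ ρ ψ F τ) {x y : V} (hx : x ∈ T)
    (hy : y ∈ T) (hφ : φ x = φ y) (hψ : ψ x ≠ ψ y) (h : Touch H φ l τ ψ x y) :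
    ∃ l' F' T', F'.card < F.card ∧ St H S φ ρ l' F' T' := by
  classical
  have hxS := s.sub hx
  have hyS := s.sub hy
  obtain ⟨u, v, hu, hv, huv⟩ := h
  let R : Finset (Fin t) := F.filter fun e => e = τ (ψ x) ∨ e = τ (ψ y)
  have hR : R ⊆ F := Finset.filter_subset _ _
  let l' : V → Fin t := fun w => if φ w ∈ R then φ x else l w
  have hoff : ∀ w, φ w ∉ R → l' w = l w := fun w hw => if_neg hw
  have hon : ∀ w, φ w ∈ R → l' w = φ x := fun w hw => if_pos hw
  have grow : ∀ z ∈ S, φ z = φ x → (τ (ψ z) ∈ F → τ (ψ z) ∈ R) →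
      ∀ w, Kr H φ l z (τ (ψ z)) w → l' w = φ x ∧ Reach H l' z w := by
    intro z hz hzx hzR
    have key : ∀ w, Kr H φ l z (τ (ψ z)) w → l' w = φ x := by
      intro w hw
      by_cases h1 : φ w ∈ R
      · exact hon w h1
      rw [hoff w h1]
      have h2 := Kr.label b s hz hw
      unfold lent at h2
      split_ifs at h2 with h3
      · rcases ht.cases z hz with h4 | ⟨z', hz', h4, h5⟩
        · exact absurd (h3 ▸ hzR h4.1) h1
        · rw [s.own z' hz' w (h3.trans h5), h4, hzx]
      · rw [h2, hzx]
    exact fun w hw => ⟨key w hw, reach_congr (fun w hw => by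
      rw [key w hw, Kr.label b s hz hw, hzx]) hw⟩
  have growx := grow x hxS rfl fun h => Finset.mem_filter.2 ⟨h, Or.inl rfl⟩
  have growy := grow y hyS hφ.symm fun h => Finset.mem_filter.2 ⟨h, Or.inr rfl⟩
  have hjoin : Reach H l' x y := by
    obtain ⟨hu1, hu2⟩ := growx u hu
    obtain ⟨hv1, hv2⟩ := growy v hv
    rcases huv with rfl | e
    · exact hu2.trans hv2.symm
    · exact (Reach.step hu2 e (hu1.trans hv1.symm)).trans hv2.symm
  have hxy : x ≠ y := fun h => hψ (by rw [h])
  -- if no free colour is involved, the old components already touch and have equal labels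
  have hRne : R.Nonempty := by
    by_contra hne
    rw [Finset.not_nonempty_iff_eq_empty] at hne
    have hnx : τ (ψ x) ∉ F := fun h => by
      have : τ (ψ x) ∈ R := Finset.mem_filter.2 ⟨h, Or.inl rfl⟩
      simp [hne] at this
    have hny : τ (ψ y) ∉ F := fun h => by
      have : τ (ψ y) ∈ R := Finset.mem_filter.2 ⟨h, Or.inr rfl⟩
      simp [hne] at this
    obtain ⟨z, hz, h1, h2⟩ := (ht.cases x hxS).resolve_left fun h => hnx h.1
    obtain ⟨w, hw, h3, h4⟩ := (ht.cases y hyS).resolve_left fun h => hny h.1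
    have hu' := Kr.reach s hz h1 h2 hu
    have hv' := Kr.reach s hw h3 h4 hv
    refine hψ (c.eq x hxS y hyS ?_)
    rcases huv with rfl | e
    · exact hu'.trans hv'.symm
    · refine (Reach.step hu' e ?_).trans hv'.symm
      rw [← hu'.label, ← hv'.label, s.lab b hxS rfl, s.lab b hyS rfl, hφ]
  have hcard : (F \ R).card < F.card := by
    have h1 := Finset.card_sdiff_add_card_eq_card hR
    have h2 := hRne.card_pos
    omega
  refine ⟨l', F \ R, T.erase y, hcard, s.update b hR hoff (fun w hw => ⟨x, hxS, hon w hw⟩)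
    (Finset.erase_subset _ _) ?_
    (fun p => if φ p.1 = φ x then τ (ψ p.2) else τ (ψ p.1)) ?_⟩
  · intro z hz
    by_cases hzy : z = y
    · exact ⟨x, Finset.mem_erase.2 ⟨hxy, hx⟩, hzy ▸ hjoin.symm⟩
    · exact ⟨z, Finset.mem_erase.2 ⟨hzy, hz⟩, Reachable.refl _⟩
  · intro e he
    obtain ⟨heF, he⟩ := Finset.mem_filter.1 he
    obtain ⟨w, hw, hwe⟩ : ∃ w, (w = x ∨ w = y) ∧ e = τ (ψ w) := by
      rcases he with he | he
      · exact ⟨x, Or.inl rfl, he⟩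
      · exact ⟨y, Or.inr rfl, he⟩
    have hwT : w ∈ T := by rcases hw with rfl | rfl <;> assumption
    have hwφ : φ w = φ x := by
      rcases hw with rfl | rfl
      · rfl
      · exact hφ.symm
    obtain ⟨q, hq, hq1, hq2⟩ : ∃ q ∈ S, ψ q = ψ w ∧ φ q ≠ φ w := by
      rcases ht.cases w (s.sub hwT) with h | ⟨z, hz, -, h⟩
      · exact h.2
      · exact absurd (hwe ▸ heF) (h ▸ s.disj z hz)
    obtain ⟨r, hr, -, hr1, hr2⟩ := s.rep b c hq
    rw [hq1] at hr2
    rw [← hr1, hwφ] at hq2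
    have hwr : ¬ AdjW H l w r := fun h =>
      c.ne w (s.sub hwT) r (s.sub hr) (by rw [hwφ]; exact hq2.symm) h hr2.symm
    have hgr : τ (ψ r) = e := by rw [hr2, hwe]
    by_cases hyr : AdjW H l y r
    · -- here `w = x`, and the component of `x` becomes adjacent to that of `r` through `y`
      have hwx : w = x := hw.resolve_right fun h => hwr (h ▸ hyr)
      refine ⟨x, r, mem_obs.2 ⟨hx, hr, hq2.symm, hwx ▸ hwr⟩, fun h => ?_, ?_, ?_⟩
      · obtain ⟨p, q', hp, hq', e'⟩ := s.monoW b hR hoff hyr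
        exact (mem_obs.1 h).2.2.2 ⟨p, q', hjoin.trans hp, hq', e'⟩
      · simp [hgr]
      · simp [hq2, hgr]
    · refine ⟨y, r, mem_obs.2 ⟨hy, hr, by rw [← hφ]; exact hq2.symm, hyr⟩, fun h => ?_, ?_, ?_⟩
      · exact Finset.notMem_erase y T (mem_obs.1 h).1
      · simp [hφ.symm, hgr]
      · simp [hq2, hgr]

/-- Two touching components of different `φ`-classes that `ψ` identifies are made adjacent by
sharing out their free target colour between the two labels. -/
lemma conflict_diff (b : Base H S φ ρ) (s : St H S φ ρ l F T) {ψ : V → Fin t}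
    (c : Compat H S φ l ψ) {τ : Fin t → Fin t} (ht : Target S φ ρ ψ F τ) {x y : V} (hx : x ∈ T)
    (hy : y ∈ T) (hφ : φ x ≠ φ y) (hψ : ψ x = ψ y) (h : Touch H φ l τ ψ x y) :
    ∃ l' F' T', F'.card < F.card ∧ St H S φ ρ l' F' T' := by
  classical
  have hxS := s.sub hx
  have hyS := s.sub hy
  obtain ⟨u, v, hu, hv, huv⟩ := h
  rw [← hψ] at hv
  obtain ⟨γ, hγ⟩ : ∃ γ, γ = τ (ψ x) := ⟨_, rfl⟩
  rw [← hγ] at hu hv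
  have hγF : γ ∈ F := by
    rcases ht.cases x hxS with h | ⟨z, hz, h1, h2⟩
    · exact hγ ▸ h.1
    rcases ht.cases y hyS with h | ⟨w, hw, h3, h4⟩
    · rw [hγ, hψ]
      exact h.1
    · have : z = w := b.inj z hz w hw (by rw [← h2, ← h4, hψ])
      exact absurd (by rw [← h1, ← h3, this]) hφ
  have hR : ({γ} : Finset (Fin t)) ⊆ F := Finset.singleton_subset_iff.2 hγF
  let l' : V → Fin t := fun w =>
    if φ w = γ then (if Kr H φ l x γ w then φ x else φ y) else l w
  have hoff : ∀ w, φ w ∉ ({γ} : Finset (Fin t)) → l' w = l w := fun w hw =>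
    if_neg fun h => hw (Finset.mem_singleton.2 h)
  have hon : ∀ w, φ w ∈ ({γ} : Finset (Fin t)) → ∃ z ∈ S, l' w = φ z := by
    intro w hw
    rw [Finset.mem_singleton] at hw
    by_cases h : Kr H φ l x γ w
    · exact ⟨x, hxS, by simp only [l', if_pos hw, if_pos h]⟩
    · exact ⟨y, hyS, by simp only [l', if_pos hw, if_neg h]⟩
  have hl'S : ∀ z ∈ S, l' z = φ z := by
    intro z hz
    rw [hoff z, s.lab b hz rfl]
    intro h
    exact s.notMem b hz (hR h)
  have growx : ∀ w, Kr H φ l x γ w → Reach H l' x w := by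
    intro w hw
    refine reach_congr (fun w hw => ?_) hw
    by_cases h : φ w = γ
    · simp only [l', lent, if_pos h, if_pos hw]
    · simp only [l', lent, if_neg h]
  have growy : ∀ w, Kr H φ l y γ w → Reach H l' y w ∨ AdjW H l' x y := by
    intro w hw
    refine Reach.ind (H := H) (l := lent φ l y γ)
      (p := fun w => Reach H l' y w ∨ AdjW H l' x y) (Or.inl (Reachable.refl _)) ?_ hw
    intro p q hp ih e hl
    rcases ih with ih | ih
    swap
    · exact Or.inr ih
    have h1 := Kr.label b s hyS (hp.step e hl)
    have h2 : l' p = φ y := by rw [← ih.label, hl'S y hyS]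
    by_cases h3 : l' q = φ y
    · exact Or.inl (ih.step e (h2.trans h3.symm))
    · right
      have h4 : φ q = γ := by
        by_contra h4
        apply h3
        rw [← h1]
        simp only [l', lent, if_neg h4]
      have h5 : Kr H φ l x γ q := by
        by_contra h5
        apply h3
        simp only [l', if_pos h4, if_neg h5]
      exact ⟨q, p, growx q h5, ih, e.symm⟩
  have hadj : AdjW H l' x y := by
    rcases growy v hv with h | h
    · rcases huv with rfl | e
      · have h1 := (growx u hu).label
        rw [← h.label, hl'S x hxS, hl'S y hyS] at h1
        exact absurd h1 hφ
      · exact ⟨u, v, growx u hu, h, e⟩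
    · exact h
  have hcard : (F \ {γ}).card < F.card := by
    have h1 := Finset.card_sdiff_add_card_eq_card hR
    rw [Finset.card_singleton] at h1
    omega
  refine ⟨l', F \ {γ}, T, hcard, s.update b hR hoff hon subset_rfl
    (fun z hz => ⟨z, hz, Reachable.refl _⟩) (fun _ => γ) ?_⟩
  intro e he
  rw [Finset.mem_singleton] at he
  refine ⟨x, y, mem_obs.2 ⟨hx, hy, hφ, fun h => c.ne x hxS y hyS hφ h hψ⟩, ?_, he.symm, he.symm⟩
  exact fun h => (mem_obs.1 h).2.2.2 hadj

lemma swap_mem {α : Type} [DecidableEq α] {p q a : α} (h : a = p ∨ a = q) :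
    Equiv.swap p q a = p ∨ Equiv.swap p q a = q := by
  rcases h with rfl | rfl
  · exact Or.inr (Equiv.swap_apply_left _ _)
  · exact Or.inl (Equiv.swap_apply_right _ _)

/-- Without conflicts, the Kempe changes that give each `x ∈ T` its target colour can be carried
out simultaneously. -/
lemma no_conflict (b : Base H S φ ρ) (s : St H S φ ρ l F T) {ψ : V → Fin t}
    (c : Compat H S φ l ψ) {τ : Fin t → Fin t} (ht : Target S φ ρ ψ F τ)
    (nc : ∀ x ∈ T, ∀ y ∈ T, Touch H φ l τ ψ x y → (φ x = φ y ↔ ψ x = ψ y)) :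
    ∃ φ' : V → Fin t, (∀ u v, H.Adj u v → φ' u ≠ φ' v) ∧
      ∀ x ∈ S, ∀ y ∈ S, φ' x = φ' y ↔ ψ x = ψ y := by
  classical
  let act : V → V → Prop := fun x v =>
    Kr H φ l x (τ (ψ x)) v ∧ (φ v = φ x ∨ φ v = τ (ψ x))
  let φ' : V → Fin t := fun v =>
    if h : ∃ x ∈ T, act x v then
      Equiv.swap (φ (Classical.choose h)) (τ (ψ (Classical.choose h))) (φ v)
    else φ v
  have cross : ∀ x ∈ S, ∀ y ∈ S, φ x ≠ φ y → φ x ≠ τ (ψ y) := by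
    intro x hx y hy hne h
    rcases ht.cases y hy with h1 | ⟨z, hz, h1, h2⟩
    · exact s.notMem b hx (h ▸ h1.1)
    · obtain ⟨w, hw, h3, h4⟩ := b.rep x hx
      have : w = z := b.inj w hw z hz (by rw [h4, h, h2])
      exact hne (by rw [← h3, this, h1])
  have key : ∀ x ∈ T, ∀ y ∈ T, ∀ u v, act x u → act y v → (u = v ∨ H.Adj u v) →
      (φ x = φ y ∧ τ (ψ x) = τ (ψ y)) ∨
      (φ x ≠ φ y ∧ φ x ≠ τ (ψ y) ∧ τ (ψ x) ≠ φ y ∧ τ (ψ x) ≠ τ (ψ y)) := by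
    intro x hx y hy u v hu hv huv
    have hiff := nc x hx y hy ⟨u, v, hu.1, hv.1, huv⟩
    by_cases h : φ x = φ y
    · exact Or.inl ⟨h, by rw [hiff.1 h]⟩
    · exact Or.inr ⟨h, cross x (s.sub hx) y (s.sub hy) h,
        (cross y (s.sub hy) x (s.sub hx) (Ne.symm h)).symm,
        fun h' => h (hiff.2 (ht.inj x (s.sub hx) y (s.sub hy) h'))⟩
  have hact : ∀ x ∈ T, ∀ v, act x v → φ' v = Equiv.swap (φ x) (τ (ψ x)) (φ v) := by
    intro x hx v hv
    have hex : ∃ x ∈ T, act x v := ⟨x, hx, hv⟩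
    obtain ⟨h1, h2⟩ := Classical.choose_spec hex
    have h3 : φ' v = Equiv.swap (φ (Classical.choose hex)) (τ (ψ (Classical.choose hex))) (φ v) :=
      dif_pos hex
    rw [h3]
    rcases key _ h1 x hx v v h2 hv (Or.inl rfl) with ⟨h4, h5⟩ | ⟨h4, h5, h6, h7⟩
    · rw [h4, h5]
    · rcases h2.2 with h8 | h8 <;> rcases hv.2 with h9 | h9
      · exact absurd (h8.symm.trans h9) h4
      · exact absurd (h8.symm.trans h9) h5
      · exact absurd (h8.symm.trans h9) h6
      · exact absurd (h8.symm.trans h9) h7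
  have hinact : ∀ v, (¬ ∃ x ∈ T, act x v) → φ' v = φ v := fun v hv => dif_neg hv
  have spread : ∀ x ∈ T, ∀ u v, act x u → H.Adj u v → (φ v = φ x ∨ φ v = τ (ψ x)) → act x v := by
    intro x hx u v hu e hv
    refine ⟨Reach.step hu.1 e ?_, hv⟩
    rw [Kr.label b s (s.sub hx) hu.1, lent]
    split_ifs with h
    · rfl
    · rw [s.lab b (s.sub hx) (hv.resolve_right h)]
  have mixed : ∀ u v, H.Adj u v → (∃ x ∈ T, act x u) → (¬ ∃ x ∈ T, act x v) → φ' u ≠ φ' v := by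
    rintro u v e ⟨x, hx, hu⟩ hv h
    rw [hact x hx u hu, hinact v hv] at h
    have h1 := swap_mem hu.2
    rw [h] at h1
    exact hv ⟨x, hx, spread x hx u v hu e h1⟩
  refine ⟨φ', ?_, ?_⟩
  · intro u v e
    by_cases hu : ∃ x ∈ T, act x u <;> by_cases hv : ∃ x ∈ T, act x v
    · obtain ⟨x, hx, hu⟩ := hu
      obtain ⟨y, hy, hv⟩ := hv
      rw [hact x hx u hu, hact y hy v hv]
      rcases key x hx y hy u v hu hv (Or.inr e) with ⟨h4, h5⟩ | ⟨h4, h5, h6, h7⟩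
      · rw [h4, h5]
        exact fun h => b.proper u v e ((Equiv.swap _ _).injective h)
      · intro h
        have h8 := swap_mem hu.2
        have h9 := swap_mem hv.2
        rw [← h] at h9
        rcases h8 with h8 | h8 <;> rcases h9 with h9 | h9
        · exact h4 (h8.symm.trans h9)
        · exact h5 (h8.symm.trans h9)
        · exact h6 (h8.symm.trans h9)
        · exact h7 (h8.symm.trans h9)
    · exact mixed u v e hu hv
    · exact (mixed v u e.symm hv hu).symm
    · rw [hinact u hu, hinact v hv]
      exact b.proper u v e
  · have hS : ∀ x ∈ S, φ' x = τ (ψ x) := by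
      intro x hx
      obtain ⟨r, hr, h1, h2, h3⟩ := s.rep b c hx
      rw [hact r hr x ⟨Kr.of_reach b s (s.sub hr) h1.symm, Or.inl h2.symm⟩, h3, h2,
        Equiv.swap_apply_left]
    intro x hx y hy
    rw [hS x hx, hS y hy]
    exact ⟨ht.inj x hx y hy, fun h => by rw [h]⟩

/-- As long as the colouring `ψ` produced by the oracle is in conflict with the current label
components, the conflict is resolved at the cost of free colours; in the end `φ` can be
Kempe-changed so as to induce on `S` the same partition as `ψ`. -/
lemma core {P : (V → Fin t) → Prop} (b : Base H S φ ρ)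
    (orc : ∀ l : V → Fin t, (∀ x ∈ S, l x = φ x) → ∃ ψ, P ψ ∧ Compat H S φ l ψ)
    (s : St H S φ ρ l F T) :
    ∃ φ' ψ : V → Fin t, P ψ ∧ (∀ u v, H.Adj u v → φ' u ≠ φ' v) ∧
      ∀ x ∈ S, ∀ y ∈ S, φ' x = φ' y ↔ ψ x = ψ y := by
  induction hn : F.card using Nat.strong_induction_on generalizing l F T with
  | _ n ih =>
    subst hn
    obtain ⟨ψ, hP, c⟩ := orc l fun x hx => s.lab b hx rfl
    obtain ⟨τ, ht⟩ := exists_target b s c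
    by_cases nc : ∀ x ∈ T, ∀ y ∈ T, Touch H φ l τ ψ x y → (φ x = φ y ↔ ψ x = ψ y)
    · obtain ⟨φ', h1, h2⟩ := no_conflict b s c ht nc
      exact ⟨φ', ψ, hP, h1, h2⟩
    · push Not at nc
      obtain ⟨x, hx, y, hy, h, h1⟩ := nc
      obtain ⟨l', F', T', hlt, s'⟩ : ∃ l' F' T', F'.card < F.card ∧ St H S φ ρ l' F' T' := by
        rcases h1 with ⟨h1, h2⟩ | ⟨h1, h2⟩
        · exact conflict_same b s c ht hx hy h1 h2 h
        · exact conflict_diff b s c ht hx hy h1 h2 h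
      exact ih _ hlt s' rfl

end Step


/-! ### The initial state -/

/-- One vertex of each `φ`-class of `S` keeps its colour; the others get distinct colours that do
not occur on `S`. -/
lemma exists_base {V : Type} {t : ℕ} {H : SimpleGraph V} {S : Finset V} {φ : V → Fin t}
    (hφ : ∀ u v, H.Adj u v → φ u ≠ φ v) (hS : S.card ≤ t) : ∃ ρ, Base H S φ ρ := by
  classical
  obtain ⟨S₀, hS₀, himg, hinj⟩ : ∃ S₀ ⊆ S, S₀.image φ = S.image φ ∧ Set.InjOn φ S₀ := by
    obtain ⟨u, h1, h2, h3⟩ := Finset.exists_subset_injOn_image_eq_of_surjOn (f := φ) (S : Set V)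
      (S.image φ) (by rw [Finset.coe_image]; exact Set.surjOn_image φ S)
    exact ⟨u, Finset.coe_subset.1 h1, h3, h2⟩
  obtain ⟨Q, hQ1, -, hQ2⟩ := Finset.exists_subsuperset_card_eq (n := S.card)
    (Finset.subset_univ (S₀.image φ)) (Finset.card_image_le.trans (Finset.card_le_card hS₀))
    (by simpa using hS)
  obtain ⟨g, hg⟩ := Set.MapsTo.exists_equiv_extend_of_card_eq (α := S) (β := Fin t) (t := Q)
    (by simp [hQ2]) (s := {x | x.1 ∈ S₀}) (f := fun x => φ x.1)
    (fun x hx => hQ1 (Finset.mem_image_of_mem φ hx))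
    (fun x hx y hy h => Subtype.ext (hinj hx hy h))
  refine ⟨fun v => if h : v ∈ S then (g ⟨v, h⟩ : Fin t) else φ v, hφ, ?_, ?_⟩
  · intro x hx y hy h
    simp only [dif_pos hx, dif_pos hy] at h
    exact congrArg Subtype.val (g.injective (Subtype.ext h))
  · intro x hx
    have : φ x ∈ S₀.image φ := himg ▸ Finset.mem_image_of_mem φ hx
    obtain ⟨y, hy, hyx⟩ := Finset.mem_image.1 this
    refine ⟨y, hS₀ hy, hyx, ?_⟩
    simp only [dif_pos (hS₀ hy)]
    rw [hg ⟨y, hS₀ hy⟩ hy, hyx]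

open Classical in
/-- The ordered pairs in `S` that are neither adjacent nor of the same colour. -/
noncomputable def bad {V : Type} {t : ℕ} (H : SimpleGraph V) (S : Finset V) (φ : V → Fin t) :
    Finset (V × V) :=
  (S ×ˢ S).filter fun p => φ p.1 ≠ φ p.2 ∧ ¬ H.Adj p.1 p.2

/-- Initially every colour lent by `ρ` is merged into the class of its borrower, and all colours
outside `ρ '' S` are free. -/
lemma exists_state {V : Type} {t : ℕ} {H : SimpleGraph V} {S : Finset V} {φ ρ : V → Fin t}
    (b : Base H S φ ρ) (hbad : 2 * S.card + (bad H S φ).card ≤ 2 * t) :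
    ∃ l F, St H S φ ρ l F S := by
  classical
  let l : V → Fin t := fun v =>
    if h : ∃ x ∈ S, φ v = ρ x then φ (Classical.choose h) else φ v
  have hF : ∀ e, e ∈ Finset.univ \ S.image ρ ↔ ∀ x ∈ S, ρ x ≠ e := by
    intro e
    simp
  refine ⟨l, Finset.univ \ S.image ρ, ?_, ?_, ?_, ?_, subset_rfl,
    fun x hx => ⟨x, hx, Reachable.refl _⟩, ?_⟩
  · intro x hx v hv
    have hex : ∃ x ∈ S, φ v = ρ x := ⟨x, hx, hv⟩
    obtain ⟨h1, h2⟩ := Classical.choose_spec hex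
    have : Classical.choose hex = x := b.inj _ h1 x hx (h2.symm.trans hv)
    simp only [l, dif_pos hex, this]
  · intro v hv
    rw [hF] at hv
    have hex : ¬ ∃ x ∈ S, φ v = ρ x := fun ⟨x, hx, h⟩ => hv x hx h.symm
    simp only [l, dif_neg hex]
  · intro v hv
    rw [hF] at hv
    by_cases hex : ∃ x ∈ S, φ v = ρ x
    · obtain ⟨h1, h2⟩ := Classical.choose_spec hex
      obtain ⟨y, hy, h3, h4⟩ := b.rep _ h1
      refine absurd ?_ (hv y hy)
      rw [h4]
      simp only [l, dif_pos hex]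
    · simp only [l, dif_neg hex]
  · intro x hx h
    exact (hF _).1 h x hx rfl
  · have h1 : (Finset.univ \ S.image ρ).card = t - S.card := by
      rw [← Finset.compl_eq_univ_sdiff, Finset.card_compl, Fintype.card_fin,
        Finset.card_image_of_injOn fun x hx y hy h => b.inj x hx y hy h]
    have h2 : obs H φ l S ⊆ bad H S φ := by
      rintro ⟨x, y⟩ h
      obtain ⟨h1, h2, h3, h4⟩ := mem_obs.1 h
      simp only [bad, Finset.mem_filter, Finset.mem_product]
      exact ⟨⟨h1, h2⟩, h3, fun h => h4 ⟨x, y, Reachable.refl _, Reachable.refl _, h⟩⟩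
    have h3 := Finset.card_le_card h2
    omega

/-! ### Counting good pairs -/

/-- With `a = |I|` and `s = |S|`, at least `a² + 3(s - a)` pairs are not bad: those inside `I`,
the diagonal of `S \ I`, and an edge in both directions from each vertex of `S \ I` into `I`. If
`s > 2a` then `S \ I` is too large to be independent and contributes two more. -/
lemma bad_card {V : Type} {t : ℕ} {G : SimpleGraph V} {S I : Finset V} {φ : V → Fin t}
    (hI : I ⊆ S) (hind : ∀ x ∈ I, ∀ y ∈ I, ¬ G.Adj x y)
    (hmax : ∀ J ⊆ S, (∀ x ∈ J, ∀ y ∈ J, ¬ G.Adj x y) → J.card ≤ I.card)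
    (hφ : ∀ x ∈ I, ∀ y ∈ I, φ x = φ y) :
    (bad G S φ).card + (I.card * I.card + 3 * (S.card - I.card) +
      if 2 * I.card < S.card then 2 else 0) ≤ S.card * S.card := by
  classical
  let J := S \ I
  have hJcard : J.card = S.card - I.card := Finset.card_sdiff_of_subset hI
  have hJ : ∀ x, x ∈ J ↔ x ∈ S ∧ x ∉ I := fun x => Finset.mem_sdiff
  have hn : ∀ r, ∃ x, r ∈ J → x ∈ I ∧ G.Adj x r := by
    intro r
    by_contra hcon
    push Not at hcon
    have hr := (hcon r).1
    have hno : ∀ x ∈ I, ¬ G.Adj x r := fun x hx => (hcon x).2 hx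
    have := hmax (insert r I) (Finset.insert_subset ((hJ r).1 hr).1 hI) (by
      intro x hx y hy h
      rw [Finset.mem_insert] at hx hy
      rcases hx with rfl | hx <;> rcases hy with rfl | hy
      · exact h.ne rfl
      · exact hno y hy h.symm
      · exact hno x hx h
      · exact hind x hx y hy h)
    rw [Finset.card_insert_of_notMem ((hJ r).1 hr).2] at this
    omega
  choose n hn using hn
  obtain ⟨X, hXc, hX⟩ : ∃ X : Finset (V × V), X.card = (if 2 * I.card < S.card then 2 else 0) ∧
      ∀ p ∈ X, p.1 ∈ J ∧ p.2 ∈ J ∧ G.Adj p.1 p.2 := by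
    split_ifs with h
    · have : ∃ x ∈ J, ∃ y ∈ J, G.Adj x y := by
        by_contra hcon
        push Not at hcon
        have := hmax J Finset.sdiff_subset hcon
        omega
      obtain ⟨x, hx, y, hy, e⟩ := this
      refine ⟨{(x, y), (y, x)}, Finset.card_pair (by simp [e.ne]), ?_⟩
      intro p hp
      simp only [Finset.mem_insert, Finset.mem_singleton] at hp
      rcases hp with rfl | rfl
      · exact ⟨hx, hy, e⟩
      · exact ⟨hy, hx, e.symm⟩
    · exact ⟨∅, rfl, by simp⟩
  let D := J.image fun r => (r, r)
  let E₁ := J.image fun r => (n r, r)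
  let E₂ := J.image fun r => (r, n r)
  have hD : D.card = J.card := Finset.card_image_of_injective _ fun x y h => (Prod.ext_iff.1 h).1
  have hE₁ : E₁.card = J.card := Finset.card_image_of_injective _ fun x y h => (Prod.ext_iff.1 h).2
  have hE₂ : E₂.card = J.card := Finset.card_image_of_injective _ fun x y h => (Prod.ext_iff.1 h).1
  have mD : ∀ p ∈ D, p.1 ∈ J ∧ p.2 = p.1 := by
    intro p hp
    obtain ⟨r, hr, rfl⟩ := Finset.mem_image.1 hp
    exact ⟨hr, rfl⟩
  have mE₁ : ∀ p ∈ E₁, p.1 ∈ I ∧ p.2 ∈ J ∧ G.Adj p.1 p.2 := by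
    intro p hp
    obtain ⟨r, hr, rfl⟩ := Finset.mem_image.1 hp
    exact ⟨(hn r hr).1, hr, (hn r hr).2⟩
  have mE₂ : ∀ p ∈ E₂, p.1 ∈ J ∧ p.2 ∈ I ∧ G.Adj p.1 p.2 := by
    intro p hp
    obtain ⟨r, hr, rfl⟩ := Finset.mem_image.1 hp
    exact ⟨hr, (hn r hr).1, (hn r hr).2.symm⟩
  have hJI : ∀ x ∈ J, x ∉ I := fun x hx => ((hJ x).1 hx).2
  have d1 : Disjoint (bad G S φ) (I ×ˢ I) := by
    rw [Finset.disjoint_left]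
    intro p hp hq
    rw [Finset.mem_product] at hq
    exact (Finset.mem_filter.1 hp).2.1 (hφ _ hq.1 _ hq.2)
  have d2 : Disjoint (bad G S φ ∪ I ×ˢ I) D := by
    rw [Finset.disjoint_left]
    intro p hp hq
    have h := mD p hq
    rcases Finset.mem_union.1 hp with hp | hp
    · exact (Finset.mem_filter.1 hp).2.1 (by rw [h.2])
    · exact hJI _ h.1 (Finset.mem_product.1 hp).1
  have d3 : Disjoint (bad G S φ ∪ I ×ˢ I ∪ D) E₁ := by
    rw [Finset.disjoint_left]
    intro p hp hq
    have h := mE₁ p hq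
    rcases Finset.mem_union.1 hp with hp | hp
    · rcases Finset.mem_union.1 hp with hp | hp
      · exact (Finset.mem_filter.1 hp).2.2 h.2.2
      · exact hJI _ h.2.1 (Finset.mem_product.1 hp).2
    · exact hJI _ (mD p hp).1 h.1
  have d4 : Disjoint (bad G S φ ∪ I ×ˢ I ∪ D ∪ E₁) E₂ := by
    rw [Finset.disjoint_left]
    intro p hp hq
    have h := mE₂ p hq
    rcases Finset.mem_union.1 hp with hp | hp
    · rcases Finset.mem_union.1 hp with hp | hp
      · rcases Finset.mem_union.1 hp with hp | hp
        · exact (Finset.mem_filter.1 hp).2.2 h.2.2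
        · exact hJI _ h.1 (Finset.mem_product.1 hp).1
      · exact h.2.2.ne (mD p hp).2.symm
    · exact hJI _ h.1 (mE₁ p hp).1
  have d5 : Disjoint (bad G S φ ∪ I ×ˢ I ∪ D ∪ E₁ ∪ E₂) X := by
    rw [Finset.disjoint_left]
    intro p hp hq
    have h := hX p hq
    rcases Finset.mem_union.1 hp with hp | hp
    · rcases Finset.mem_union.1 hp with hp | hp
      · rcases Finset.mem_union.1 hp with hp | hp
        · rcases Finset.mem_union.1 hp with hp | hp
          · exact (Finset.mem_filter.1 hp).2.2 h.2.2
          · exact hJI _ h.1 (Finset.mem_product.1 hp).1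
        · exact h.2.2.ne (mD p hp).2.symm
      · exact hJI _ h.1 (mE₁ p hp).1
    · exact hJI _ h.2.1 (mE₂ p hp).2.1
  have hJS : ∀ x ∈ J, x ∈ S := fun x hx => ((hJ x).1 hx).1
  have hsub : bad G S φ ∪ I ×ˢ I ∪ D ∪ E₁ ∪ E₂ ∪ X ⊆ S ×ˢ S := by
    refine Finset.union_subset (Finset.union_subset (Finset.union_subset (Finset.union_subset
      (Finset.union_subset (Finset.filter_subset _ _) (Finset.product_subset_product hI hI))
      ?_) ?_) ?_) ?_ <;> intro p hp <;> rw [Finset.mem_product]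
    · have := mD p hp
      exact ⟨hJS _ this.1, this.2 ▸ hJS _ this.1⟩
    · exact ⟨hI (mE₁ p hp).1, hJS _ (mE₁ p hp).2.1⟩
    · exact ⟨hJS _ (mE₂ p hp).1, hI (mE₂ p hp).2.1⟩
    · exact ⟨hJS _ (hX p hp).1, hJS _ (hX p hp).2.1⟩
  have hc := Finset.card_le_card hsub
  rw [Finset.card_union_of_disjoint d5, Finset.card_union_of_disjoint d4,
    Finset.card_union_of_disjoint d3, Finset.card_union_of_disjoint d2,
    Finset.card_union_of_disjoint d1, Finset.card_product, Finset.card_product,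
    hD, hE₁, hE₂, hXc, hJcard] at hc
  omega

lemma count_arith {s a b t : ℕ} (ha : a ≤ s) (ha0 : 0 < s → 0 < a)
    (h : b + (a * a + 3 * (s - a) + if 2 * a < s then 2 else 0) ≤ s * s)
    (hs : (28 ≤ t ∧ s ≤ 8) ∨ (40 ≤ t ∧ s ≤ 9)) : 2 * s + b ≤ 2 * t := by
  have hs9 : s ≤ 9 := by omega
  interval_cases s <;> interval_cases a <;> simp at h ha0 <;> omega

/-! ### Separators -/

/-- Contracting a side together with an independent set `I` yields a colouring of the other
side that is constant on `I`. -/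
lemma dirac {V : Type} [Fintype V] {k : ℕ} {G : SimpleGraph V} (hG : ContractionCritical k G)
    {A B : Set V} {S I : Finset V} (hAB : ∀ v ∈ A, v ∉ B) (hAS : ∀ v ∈ A, v ∉ S)
    (hBS : ∀ v ∈ B, v ∉ S) (hk : Nonempty (Fin (k - 1))) {b₀ : V} (hb₀ : b₀ ∈ B)
    (hB : ∀ v ∈ B, Reach G (fun v => v ∈ B) b₀ v) (hnb : ∀ x ∈ S, ∃ y ∈ B, G.Adj x y)
    (hI : I ⊆ S) (hind : ∀ x ∈ I, ∀ y ∈ I, ¬ G.Adj x y) :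
    ∃ φ : V → Fin (k - 1), (∀ u v, (within G (A ∪ S)).Adj u v → φ u ≠ φ v) ∧
      ∀ x ∈ I, ∀ y ∈ I, φ x = φ y := by
  classical
  let lab : V → Option V := fun v => if v ∈ I ∨ v ∈ B then none else some v
  have lab1 : ∀ v, (v ∈ I ∨ v ∈ B) → lab v = none := fun v h => if_pos h
  have lab2 : ∀ v, ¬ (v ∈ I ∨ v ∈ B) → lab v = some v := fun v h => if_neg h
  obtain ⟨φ, h1, h2, -⟩ := oracle hG (A := B) (B := A) (S := S) (fun v hv h => hAB v h hv) hBS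
    hAS hk ⟨b₀, hb₀⟩ lab (by
      intro x hx y hy e h
      by_cases h1 : x ∈ I ∨ x ∈ B <;> by_cases h2 : y ∈ I ∨ y ∈ B
      · exact hind x (h1.resolve_right fun h => hBS x h hx) y
          (h2.resolve_right fun h => hBS y h hy) e
      · rw [lab1 x h1, lab2 y h2] at h
        simp at h
      · rw [lab2 x h1, lab1 y h2] at h
        simp at h
      · rw [lab2 x h1, lab2 y h2] at h
        exact e.ne (Option.some.inj h))
  have hBr : ∀ v ∈ B, Reach (within G (B ∪ S)) lab b₀ v := by
    intro v hv
    refine (Reach.ind (H := G) (l := fun v => v ∈ B)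
      (p := fun v => v ∈ B ∧ Reach (within G (B ∪ S)) lab b₀ v)
      ⟨hb₀, Reachable.refl _⟩ ?_ (hB v hv)).2
    rintro u w - ⟨hu, ih⟩ e hl
    have hw : w ∈ B := by
      have : (u ∈ B) = (w ∈ B) := hl
      exact this ▸ hu
    exact ⟨hw, ih.step ⟨e, Or.inl hu, Or.inl hw⟩ (by rw [lab1 u (Or.inr hu), lab1 w (Or.inr hw)])⟩
  have hIr : ∀ x ∈ I, Reach (within G (B ∪ S)) lab b₀ x := by
    intro x hx
    obtain ⟨y, hy, e⟩ := hnb x (hI hx)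
    exact (hBr y hy).step ⟨e.symm, Or.inl hy, Or.inr (hI hx)⟩
      (by rw [lab1 y (Or.inr hy), lab1 x (Or.inl hx)])
  refine ⟨φ, h1, fun x hx y hy => h2 x (hI hx) y (hI hy) ((hIr x hx).symm.trans (hIr y hy))⟩

/-- Colourings of the two sides inducing the same partition of `S` combine to one of `G`. -/
lemma glue {V : Type} {t : ℕ} {G : SimpleGraph V} {A B : Set V} {S : Finset V}
    (hcov : ∀ v, v ∈ A ∨ v ∈ B ∨ v ∈ S)
    (hno : ∀ u ∈ A, ∀ v ∈ B, ¬ G.Adj u v) {φ ψ : V → Fin t}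
    (hφ : ∀ u v, (within G (A ∪ S)).Adj u v → φ u ≠ φ v)
    (hψ : ∀ u v, (within G (B ∪ S)).Adj u v → ψ u ≠ ψ v)
    (hker : ∀ x ∈ S, ∀ y ∈ S, φ x = φ y ↔ ψ x = ψ y) : G.Colorable t := by
  classical
  let f : Fin t → Fin t := fun e => if h : ∃ x ∈ S, ψ x = e then φ (Classical.choose h) else e
  have hf : ∀ x ∈ S, f (ψ x) = φ x := by
    intro x hx
    have hex : ∃ y ∈ S, ψ y = ψ x := ⟨x, hx, rfl⟩
    obtain ⟨h1, h2⟩ := Classical.choose_spec hex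
    have : f (ψ x) = φ (Classical.choose hex) := dif_pos hex
    rw [this]
    exact (hker _ h1 x hx).2 h2
  obtain ⟨g, hg⟩ := Set.MapsTo.exists_equiv_extend_of_card_eq (α := Fin t) (β := Fin t)
    (t := Finset.univ) (by simp) (s := ψ '' S) (f := f) (fun x _ => by simp) (by
      rintro _ ⟨x, hx, rfl⟩ _ ⟨y, hy, rfl⟩ h
      rw [hf x hx, hf y hy] at h
      exact (hker x hx y hy).1 h)
  have hgS : ∀ x ∈ S, (g (ψ x) : Fin t) = φ x := fun x hx => by
    rw [hg _ ⟨x, hx, rfl⟩, hf x hx]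
  have hginj : ∀ a b, (g a : Fin t) = g b → a = b := fun a b h => g.injective (Subtype.ext h)
  have hmix : ∀ u v, u ∈ B → v ∉ B → G.Adj u v → (g (ψ u) : Fin t) ≠ φ v := by
    intro u v hu hv e h
    rcases hcov v with h1 | h1 | h1
    · exact hno v h1 u hu e.symm
    · exact hv h1
    · rw [← hgS v h1] at h
      exact hψ u v ⟨e, Or.inl hu, Or.inr h1⟩ (hginj _ _ h)
  refine ⟨Coloring.mk (fun v => if v ∈ B then (g (ψ v) : Fin t) else φ v) ?_⟩
  intro u v e
  by_cases hu : u ∈ B <;> by_cases hv : v ∈ B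
  · rw [if_pos hu, if_pos hv]
    exact fun h => hψ u v ⟨e, Or.inl hu, Or.inl hv⟩ (hginj _ _ h)
  · rw [if_pos hu, if_neg hv]
    exact hmix u v hu hv e
  · rw [if_neg hu, if_pos hv]
    exact (hmix v u hv hu e.symm).symm
  · rw [if_neg hu, if_neg hv]
    have h1 : ∀ w, w ∉ B → w ∈ A ∪ (S : Set V) := fun w hw => (hcov w).imp_right fun h =>
      h.resolve_left hw
    exact hφ u v ⟨e, h1 u hu, h1 v hv⟩

/-- A contraction-critical graph has no small separator `S` all of whose vertices have a
neighbour in the same component `B` of the rest. -/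
lemma no_separation {V : Type} [Fintype V] {k : ℕ} {G : SimpleGraph V}
    (hG : ContractionCritical k G)
    {A B : Set V} {S : Finset V} (hcov : ∀ v, v ∈ A ∨ v ∈ B ∨ v ∈ S)
    (hAB : ∀ v ∈ A, v ∉ B) (hAS : ∀ v ∈ A, v ∉ S)
    (hBS : ∀ v ∈ B, v ∉ S) (hno : ∀ u ∈ A, ∀ v ∈ B, ¬ G.Adj u v) (hA : A.Nonempty)
    {b₀ : V} (hb₀ : b₀ ∈ B)
    (hB : ∀ v ∈ B, Reach G (fun v => v ∈ B) b₀ v) (hnb : ∀ x ∈ S, ∃ y ∈ B, G.Adj x y)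
    (hs : (28 ≤ k - 1 ∧ S.card ≤ 8) ∨ (40 ≤ k - 1 ∧ S.card ≤ 9)) : False := by
  classical
  have hk : Nonempty (Fin (k - 1)) := ⟨⟨0, by omega⟩⟩
  obtain ⟨I, hI, hmax⟩ := Finset.exists_max_image
    (S.powerset.filter fun J => ∀ x ∈ J, ∀ y ∈ J, ¬ G.Adj x y) Finset.card ⟨∅, by simp⟩
  rw [Finset.mem_filter, Finset.mem_powerset] at hI
  obtain ⟨hIS, hind⟩ := hI
  have hmax' : ∀ J ⊆ S, (∀ x ∈ J, ∀ y ∈ J, ¬ G.Adj x y) → J.card ≤ I.card := fun J h1 h2 =>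
    hmax J (Finset.mem_filter.2 ⟨Finset.mem_powerset.2 h1, h2⟩)
  obtain ⟨φ, hφ, hφI⟩ := dirac hG hAB hAS hBS hk hb₀ hB hnb hIS hind
  have hI0 : 0 < S.card → 0 < I.card := by
    intro h
    obtain ⟨x, hx⟩ := Finset.card_pos.1 h
    have := hmax' {x} (by simpa using hx) (by simp)
    rwa [Finset.card_singleton] at this
  have hbad : bad (within G (A ∪ S)) S φ ⊆ bad G S φ := by
    rintro ⟨x, y⟩ h
    simp only [bad, Finset.mem_filter, Finset.mem_product] at h ⊢
    exact ⟨h.1, h.2.1, fun e => h.2.2 ⟨e, Or.inr h.1.1, Or.inr h.1.2⟩⟩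
  have hcount := count_arith (Finset.card_le_card hIS) hI0
    (bad_card hIS hind hmax' hφI) hs
  have hbad' := Finset.card_le_card hbad
  obtain ⟨ρ, b⟩ := exists_base hφ (S := S) (by omega)
  obtain ⟨l, F, s⟩ := exists_state b (by omega)
  obtain ⟨φ', ψ, h1, h2, h3⟩ := core (P := fun ψ => ∀ u v, (within G (B ∪ S)).Adj u v → ψ u ≠ ψ v)
    b (by
      intro l hl
      obtain ⟨ψ, h1, h2, h3⟩ := oracle hG hAB hAS hBS hk hA l (by
        intro x hx y hy e
        rw [hl x hx, hl y hy]
        exact hφ x y ⟨e, Or.inr hx, Or.inr hy⟩)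
      refine ⟨ψ, h1, h2, fun x hx y hy hne => h3 x hx y hy fun h => hne ?_⟩
      rw [← hl x hx, ← hl y hy, h.label]) s
  have hc : G.chromaticNumber ≤ ((k - 1 : ℕ) : ENat) :=
    (glue hcov hno h2 h1 h3).chromaticNumber_le
  rw [hG.1] at hc
  have : k ≤ k - 1 := by exact_mod_cast hc
  omega

lemma kconnected_of {V : Type} [Fintype V] {k n : ℕ} {G : SimpleGraph V}
    (hG : ContractionCritical k G) (hs : (29 ≤ k ∧ n = 9) ∨ (41 ≤ k ∧ n = 10)) :
    KConnected G n := by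
  classical
  have hV : k ≤ Fintype.card V := by
    have h : G.chromaticNumber ≤ (Fintype.card V : ENat) :=
      (G.colorable_of_fintype).chromaticNumber_le
    rw [hG.1] at h
    exact_mod_cast h
  refine ⟨by omega, ?_⟩
  by_contra hcon
  push Not at hcon
  obtain ⟨S₁, hS₁, hS₁'⟩ := hcon
  obtain ⟨S, hS, hmin⟩ := Finset.exists_min_image
    (Finset.univ.filter fun S : Finset V => ¬ (G.induce {v : V | v ∉ S}).Connected) Finset.card
    ⟨S₁, by simpa using hS₁'⟩
  have hSn : S.card < n := (hmin S₁ (by simpa using hS₁')).trans_lt hS₁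
  rw [Finset.mem_filter] at hS
  replace hS := hS.2
  have hne : Nonempty {v : V | v ∉ S} := by
    obtain ⟨v, hv⟩ : ∃ v, v ∉ S := by
      by_contra h
      push Not at h
      have := Finset.card_le_card (fun v _ => h v : Finset.univ ⊆ S)
      rw [Finset.card_univ] at this
      omega
    exact ⟨⟨v, hv⟩⟩
  have hpre : ¬ (G.induce {v : V | v ∉ S}).Preconnected := fun h => hS ⟨h⟩
  unfold SimpleGraph.Preconnected at hpre
  push Not at hpre
  obtain ⟨⟨b₀, hb₀⟩, ⟨u₀, hu₀⟩, hnr⟩ := hpre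
  let B : Set V := {v | Reach G (fun v => v ∈ S) b₀ v}
  have hBS : ∀ v ∈ B, v ∉ S := by
    intro v hv h
    have : (b₀ ∈ S) = (v ∈ S) := Reach.label hv
    exact hb₀ (this ▸ h)
  have hstep : ∀ u ∈ B, ∀ v, v ∉ S → G.Adj u v → v ∈ B := fun u hu v hv e =>
    Reach.step hu e (by simp [hv, hBS u hu])
  have hb₀B : b₀ ∈ B := Reachable.refl _
  have hu₀B : u₀ ∉ B := by
    intro h
    refine hnr ?_
    refine Reach.ind (H := G) (l := fun v => v ∈ S)
      (p := fun v => ∀ hv : v ∉ S, (G.induce {v : V | v ∉ S}).Reachable ⟨b₀, hb₀⟩ ⟨v, hv⟩)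
      (fun _ => Reachable.refl _) ?_ h hu₀
    intro u v hu ih e _ hv
    exact (ih (hBS u hu)).trans (SimpleGraph.Adj.reachable e)
  refine no_separation hG (A := {v | v ∉ S ∧ v ∉ B}) (B := B) (S := S) ?_ (fun v hv => hv.2)
    (fun v hv => hv.1) hBS ?_ ⟨u₀, hu₀, hu₀B⟩ hb₀B ?_ ?_ (by omega)
  · intro v
    by_cases h1 : v ∈ S
    · exact Or.inr (Or.inr h1)
    · by_cases h2 : v ∈ B
      · exact Or.inr (Or.inl h2)
      · exact Or.inl ⟨h1, h2⟩
  · intro u hu v hv e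
    exact hu.2 (hstep v hv u hu.1 e.symm)
  · intro v hv
    refine reach_congr (l₁ := fun v => v ∈ B) (fun _ _ => rfl) ?_
    refine (Reach.ind (H := G) (l := fun v => v ∈ S)
      (p := fun v => Reach G (fun v => v ∈ B) b₀ v) (Reachable.refl _) ?_ hv)
    intro u w hu ih e hl
    have hw : w ∈ B := Reach.step hu e hl
    exact ih.step e (by simp [hw, show u ∈ B from hu])
  · -- by minimality of `S`, every vertex of `S` is attached to `B`
    intro x hx
    by_contra hcon
    push Not at hcon
    have hconn : (G.induce {v : V | v ∉ S.erase x}).Connected := by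
      by_contra h
      have := hmin (S.erase x) (by simpa using h)
      have h2 := Finset.card_erase_lt_of_mem hx
      omega
    have hout : ∀ v, v ∉ S → v ∉ S.erase x := fun v hv h => hv (Finset.mem_of_mem_erase h)
    have hnx : ∀ p ∈ B, ∀ y, y = x → ¬ G.Adj p y := by
      rintro p hp y rfl e
      exact hcon p hp e.symm
    have hwalk : ∀ a c : {v : V | v ∉ S.erase x},
        (G.induce {v : V | v ∉ S.erase x}).Walk a c → a.1 ∈ B → c.1 ∈ B := by
      intro a c w
      induction w with
      | nil => exact id
      | @cons p q r e w ih =>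
        intro hp
        have e' : G.Adj p.1 q.1 := e
        refine ih (hstep p.1 hp q.1 ?_ e')
        intro hq
        have hqx : q.1 = x := by
          by_contra h
          exact q.2 (Finset.mem_erase.2 ⟨h, hq⟩)
        exact hnx p.1 hp q.1 hqx e'
    obtain ⟨w⟩ := hconn.preconnected ⟨b₀, hout _ hb₀⟩ ⟨u₀, hout _ hu₀⟩
    exact hu₀B (hwalk _ _ w hb₀B)

theorem stmt10 {V : Type} [Fintype V] (k : ℕ) (G : SimpleGraph V)
    (hG : ContractionCritical k G) (hnc : G ≠ ⊤) :
    (29 ≤ k → KConnected G 9) ∧ (41 ≤ k → KConnected G 10) := 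
  ⟨fun h => kconnected_of hG (Or.inl ⟨h, rfl⟩), fun h => kconnected_of hG (Or.inr ⟨h, rfl⟩)⟩
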